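/- Given Safety GNPTs A₁ and A₂ over the same alphabet Σ with n₁ and n₂ states and counting bounds b₁ and b₂ respectively, there exists a Safety GNPT A with n₁·n₂ states and counting bound max{b₁,b₂} such that L(A) = L(A₁) ∩ L(A₂). -/

import Mathlib

/-- `CardGT s n`: the set `s` has more than `n` elements. -/
def CardGT {α : Type*} (s : Set α) (n : ℕ) : Prop :=
  ∃ t : Finset α, ↑t ⊆ s ∧ n < t.card

/-- `CardLE s n`: the set `s` has at most `n` elements. -/
def CardLE {α : Type*} (s : Set α) (n : ℕ) : Prop :=
  ∃ t : Finset α, s ⊆ ↑t ∧ t.card ≤ n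
/-! ### Forests and trees of nodes (nonempty finite words over ℕ) -/

/-- Nodes of forests: finite words over ℕ (the forest condition requires nonemptiness). -/
abbrev Node := List ℕ

/-- `y` is a child (successor) of `x`: `y = x·c` for some `c ∈ ℕ`. -/
def IsChild (x y : Node) : Prop := ∃ c : ℕ, y = x ++ [c]

/-- A forest: a set of nonempty words over ℕ closed under nonempty prefixes. -/
def IsForest (F : Set Node) : Prop :=
  (∀ x ∈ F, x ≠ []) ∧ (∀ x y : Node, y ∈ F → IsChild x y → x ≠ [] → x ∈ F)

/-- The roots of a forest are its length-one elements. -/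
def IsRootNode (x : Node) : Prop := x.length = 1

/-- A tree: a nonempty forest all of whose elements start with the same letter. -/
def IsTree (T : Set Node) : Prop :=
  IsForest T ∧ T.Nonempty ∧ ∃ c : ℕ, ∀ x ∈ T, x.head? = some c
/-! ### Fully enriched automata and two-way graded alternating parity tree automata -/

/-- Positive Boolean formulas over atoms of type `X`. -/
inductive PosBool (X : Type) where
  | tru
  | fls
  | atom (x : X)
  | and (f g : PosBool X)
  | or (f g : PosBool X)

namespace PosBool

variable {X : Type}

/-- A set of atoms satisfies a positive Boolean formula. -/
def sats (S : Set X) : PosBool X → Prop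
  | .tru => True
  | .fls => False
  | .atom x => x ∈ S
  | .and f g => f.sats S ∧ g.sats S
  | .or f g => f.sats S ∨ g.sats S

/-- All atoms occurring in a positive Boolean formula satisfy `p`. -/
def All (p : X → Prop) : PosBool X → Prop
  | .tru => True
  | .fls => True
  | .atom x => p x
  | .and f g => f.All p ∧ g.All p
  | .or f g => f.All p ∧ g.All p

end PosBool

/-- Moves of a fully enriched automaton: `⟨n⟩`, `[n]`, `−1`, `ε`, `⟨root⟩`, `[root]`. -/
inductive Mv where
  | dia (n : ℕ)
  | box (n : ℕ)
  | up
  | stay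
  | someRoot
  | allRoots

/-- The counting parameter of a move is bounded by `b`. -/
def Mv.Bounded (b : ℕ) : Mv → Prop
  | .dia n => n ≤ b
  | .box n => n ≤ b
  | _ => True

/-- Two-way moves (no jumps to roots): the moves in `D_b⁻`. -/
def Mv.TwoWay : Mv → Prop
  | .someRoot => False
  | .allRoots => False
  | _ => True

/-- A fully enriched automaton (FEA) over the alphabet `A` with state type `Q`:
counting bound `b > 0`, transition function `δ : Q × A → B⁺(D_b × Q)`, initial state,
and a parity condition `F₁ ⊆ … ⊆ F_k = Q` of index `k`. -/
structure FEA (A Q : Type) where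
  finQ : Finite Q
  b : ℕ
  hb : 0 < b
  δ : Q → A → PosBool (Mv × Q)
  hδ : ∀ q a, (δ q a).All (fun m => m.1.Bounded b)
  init : Q
  k : ℕ
  hk : 0 < k
  F : Fin k → Set Q
  Fmono : Monotone F
  Flast : ∀ (q : Q) (h : k - 1 < k), q ∈ F ⟨k - 1, h⟩

/-- The roots of a forest. -/
def rootsOf (F : Set Node) : Set Node := {x ∈ F | x.length = 1}

/-- Executing a single atom `(d, s)` of a transition at the run node `y`
(currently reading the input node `x`). -/
def ExecOK {Q : Type} (Fo : Set Node) (Tr : Set Node) (r : Node → Node × Q)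
    (y x : Node) : Mv × Q → Prop
  | (.stay, s) => ∃ j : ℕ, y ++ [j] ∈ Tr ∧ r (y ++ [j]) = (x, s)
  | (.up, s) => 1 < x.length ∧ ∃ j : ℕ, y ++ [j] ∈ Tr ∧ r (y ++ [j]) = (x.dropLast, s)
  | (.dia n, s) => ∃ M : Finset ℕ, M.card = n + 1 ∧
      ∀ c ∈ M, x ++ [c] ∈ Fo ∧ ∃ j : ℕ, y ++ [j] ∈ Tr ∧ r (y ++ [j]) = (x ++ [c], s)
  | (.box n, s) => ∃ M : Finset ℕ, M.card ≤ n ∧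
      ∀ c : ℕ, x ++ [c] ∈ Fo → c ∉ M →
        ∃ j : ℕ, y ++ [j] ∈ Tr ∧ r (y ++ [j]) = (x ++ [c], s)
  | (.someRoot, s) => ∃ cr ∈ rootsOf Fo, ∃ j : ℕ, y ++ [j] ∈ Tr ∧ r (y ++ [j]) = (cr, s)
  | (.allRoots, s) => ∀ cr ∈ rootsOf Fo, ∃ j : ℕ, y ++ [j] ∈ Tr ∧ r (y ++ [j]) = (cr, s)

/-- A run `⟨T_r, r⟩` of a FEA on the labeled forest `⟨Fo, V⟩`. -/
structure FEA.IsRun {A Q : Type} (M : FEA A Q) (Fo : Set Node) (V : Node → A)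
    (Tr : Set Node) (r : Node → Node × Q) : Prop where
  tree : IsTree Tr
  start : ∀ z ∈ Tr, z.length = 1 → (r z).1 ∈ rootsOf Fo ∧ (r z).2 = M.init
  step : ∀ y ∈ Tr, ∃ S : Set (Mv × Q),
      (M.δ (r y).2 (V (r y).1)).sats S ∧ ∀ ds ∈ S, ExecOK Fo Tr r y (r y).1 ds

/-- An infinite path of the tree `Tr` starting at its root. -/
def IsInfPath (Tr : Set Node) (p : ℕ → Node) : Prop :=
  p 0 ∈ Tr ∧ (p 0).length = 1 ∧ ∀ i : ℕ, p (i + 1) ∈ Tr ∧ IsChild (p i) (p (i + 1))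

/-- `ParityOK k F I`: the minimal (1-based) index `i` with `I ∩ F_i ≠ ∅` is even
(the zero-based index is odd). -/
def ParityOK {Q : Type} (k : ℕ) (F : Fin k → Set Q) (I : Set Q) : Prop :=
  ∃ j : Fin k, (I ∩ F j).Nonempty ∧ Odd j.val ∧
    ∀ j' : Fin k, (I ∩ F j').Nonempty → j ≤ j'

/-- The set of states occurring infinitely often along a path of a run. -/
def InfStates {Q : Type} (r : Node → Node × Q) (p : ℕ → Node) : Set Q :=
  {q | ∀ n : ℕ, ∃ i : ℕ, n ≤ i ∧ (r (p i)).2 = q}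

/-- Acceptance of a labeled forest by a FEA. -/
def FEA.Accepts {A Q : Type} (M : FEA A Q) (Fo : Set Node) (V : Node → A) : Prop :=
  ∃ (Tr : Set Node) (r : Node → Node × Q),
    M.IsRun Fo V Tr r ∧
    ∀ p : ℕ → Node, IsInfPath Tr p → ParityOK M.k M.F (InfStates r p)

/-- A two-way graded alternating parity tree automaton (2GAPT): a FEA that runs on
trees and uses only the moves in `D_b⁻` (no jumps to roots). -/
structure GAPT2 (A Q : Type) extends FEA A Q where
  htw : ∀ q a, (δ q a).All (fun m => m.1.TwoWay)

/-- Acceptance of a labeled tree by a 2GAPT (a tree being a forest with a single root,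
the run conditions are those of FEAs). -/
def GAPT2.Accepts {A Q : Type} (M : GAPT2 A Q) (T : Set Node) (V : Node → A) : Prop :=
  M.toFEA.Accepts T V
/-! ### Graded nondeterministic parity tree automata (GNPTs) -/

/-- Boolean formulas over variables of type `Y`. -/
inductive BForm (Y : Type) where
  | tru
  | fls
  | var (y : Y)
  | not (f : BForm Y)
  | and (f g : BForm Y)
  | or (f g : BForm Y)

/-- A subset of `Y` (a letter of `2^Y`) satisfies a Boolean formula. -/
def BForm.holds {Y : Type} (s : Set Y) : BForm Y → Prop
  | .tru => True
  | .fls => False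
  | .var y => y ∈ s
  | .not f => ¬ f.holds s
  | .and f g => f.holds s ∧ g.holds s
  | .or f g => f.holds s ∨ g.holds s

/-- A constraint pair `⟨θ, ξ⟩`: a Boolean formula together with a bound
`(>, n)` (encoded `(true, n)`) or `(≤, n)` (encoded `(false, n)`). -/
abbrev CPair (Y : Type) := BForm Y × Bool × ℕ

/-- A `b`-counting constraint: a finite set (list) of constraint pairs. -/
abbrev CConstr (Y : Type) := List (CPair Y)

/-- A word, given by an index set `I` and letters `f i ∈ 2^Y` for `i ∈ I`,
satisfies a constraint pair. (Only the number of occurrences of letters satisfying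
`θ` matters, not their order.) -/
def CPairSat {ι Y : Type} (I : Set ι) (f : ι → Set Y) : CPair Y → Prop
  | (θ, true, n) => CardGT {i ∈ I | θ.holds (f i)} n
  | (θ, false, n) => CardLE {i ∈ I | θ.holds (f i)} n

/-- A word satisfies a counting constraint if it satisfies every pair in it. -/
def CSat {ι Y : Type} (I : Set ι) (f : ι → Set Y) (C : CConstr Y) : Prop :=
  ∀ p ∈ C, CPairSat I f p

/-- A graded nondeterministic parity tree automaton (GNPT) over the alphabet `A`:
the states form a finite set `Q ⊆ 2^Y` for a finite variable set `Y`, the transition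
function maps a state and a letter to a `b`-counting constraint of cardinality at most
`log |Q|`, and acceptance is by a parity condition `F₁ ⊆ … ⊆ F_k`. -/
structure GNPT (A Y : Type) where
  finY : Finite Y
  b : ℕ
  Q : Set (Set Y)
  finQ : Q.Finite
  δ : Set Y → A → CConstr Y
  hb : ∀ q ∈ Q, ∀ a, ∀ p ∈ δ q a, p.2.2 ≤ b
  hsize : ∀ q ∈ Q, ∀ a, (δ q a).length ≤ Nat.log 2 (Nat.card Q)
  init : Set Y
  hinit : init ∈ Q
  k : ℕ
  F : Fin k → Set (Set Y)
  Fmono : Monotone F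

namespace GNPT

variable {A Y : Type}

/-- A run of a GNPT on a labeled tree `⟨T, V⟩`: a `Q`-labeling `r` of the same tree `T`
such that the root is labeled by the initial state and, at every node, the word of
labels of its successors satisfies the corresponding counting constraint. -/
def IsRun (M : GNPT A Y) (T : Set Node) (V : Node → A) (r : Node → Set Y) : Prop :=
  (∀ x ∈ T, r x ∈ M.Q) ∧
  (∀ x ∈ T, x.length = 1 → r x = M.init) ∧
  ∀ x ∈ T, CSat {c : ℕ | x ++ [c] ∈ T} (fun c => r (x ++ [c])) (M.δ (r x) (V x))

/-- Acceptance of a labeled tree by a GNPT. -/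
def Accepts (M : GNPT A Y) (T : Set Node) (V : Node → A) : Prop :=
  ∃ r : Node → Set Y, M.IsRun T V r ∧
    ∀ p : ℕ → Node, IsInfPath T p →
      ParityOK M.k M.F {s | ∀ n : ℕ, ∃ i : ℕ, n ≤ i ∧ r (p i) = s}

/-- The language of a GNPT is empty: it accepts no labeled tree. -/
def LEmpty (M : GNPT A Y) : Prop :=
  ¬ ∃ (T : Set Node) (V : Node → A), IsTree T ∧ M.Accepts T V

/-- A `Forall` GNPT: every transition requires all successors to carry one
designated state. -/
def IsForall (M : GNPT A Y) : Prop :=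
  ∀ q ∈ M.Q, ∀ a : A, ∃ q' ∈ M.Q, ∃ θ : BForm Y,
    (∀ s : Set Y, θ.holds s ↔ s = q') ∧ M.δ q a = [(θ.not, false, 0)]

/-- A `Safety` GNPT: there is no acceptance condition, i.e. the parity condition
accepts every infinite path. -/
def IsSafety (M : GNPT A Y) : Prop :=
  ∀ I : Set (Set Y), I.Nonempty → ParityOK M.k M.F I

end GNPT

/-!
A subset of `Y₁ ⊕ Y₂` is a pair of a subset of `Y₁` and a subset of `Y₂`, so a labeling by such
subsets is a pair of labelings. Imposing the counting constraints of both automata, each read on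
its own component, makes the runs of the product exactly the pairs of runs; the logarithmic bound
on the size of constraints survives because these sizes add up while the numbers of states
multiply. Since there are finitely many states, the states visited infinitely often by the second
component are the projections of the pairs visited infinitely often. Pulling back the parity
condition of the second automaton therefore yields its acceptance, and a `Safety` first automaton
asks for nothing beyond a run.
-/

section InfinitelyOften

variable {α β : Type*} {S : Set α} {u : ℕ → α}

/-- The set of values taken infinitely often by a sequence; for the sequence of states along an
infinite path of a run, this is the set to which the parity condition is applied. -/
def infinitelyOften (u : ℕ → α) : Set α :=
  {a | ∀ n : ℕ, ∃ i : ℕ, n ≤ i ∧ u i = a}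

theorem mem_infinitelyOften {a : α} :
    a ∈ infinitelyOften u ↔ ∃ᶠ i in Filter.atTop, u i = a :=
  Filter.frequently_atTop.symm

theorem infinitelyOften_comp (hS : S.Finite) (hu : ∀ i, u i ∈ S) (g : α → β) :
    infinitelyOften (g ∘ u) = g '' infinitelyOften u := by
  ext b
  simp only [Set.mem_image, mem_infinitelyOften, Function.comp_apply]
  constructor
  · intro hb
    obtain ⟨a, -, ha⟩ := hS.frequently_exists.1
      (hb.mono fun i hi => ⟨u i, hu i, rfl, hi⟩ :
        ∃ᶠ i in Filter.atTop, ∃ a ∈ S, u i = a ∧ g a = b)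
    obtain ⟨_, -, hab⟩ := ha.exists
    exact ⟨a, ha.mono fun _ => And.left, hab⟩
  · rintro ⟨a, ha, rfl⟩
    exact ha.mono fun _ => congrArg g

theorem infinitelyOften_nonempty (hS : S.Finite) (hu : ∀ i, u i ∈ S) :
    (infinitelyOften u).Nonempty := by
  obtain ⟨a, -, ha⟩ := hS.frequently_exists.1
    (Filter.Frequently.of_forall fun i => ⟨u i, hu i, rfl⟩ :
      ∃ᶠ i in Filter.atTop, ∃ a ∈ S, u i = a)
  exact ⟨a, mem_infinitelyOften.2 ha⟩

end InfinitelyOften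

theorem IsInfPath.mem {T : Set Node} {p : ℕ → Node} (hp : IsInfPath T p) : ∀ i, p i ∈ T
  | 0 => hp.1
  | i + 1 => (hp.2.2 i).1

theorem parityOK_preimage_iff {Q Q' : Type} (g : Q → Q') {k : ℕ} {F : Fin k → Set Q'}
    {I : Set Q} : ParityOK k (fun j => g ⁻¹' F j) I ↔ ParityOK k F (g '' I) := by
  simp only [ParityOK, Set.image_inter_nonempty_iff]

theorem natLog_add_natLog_le_natLog_mul {b m n : ℕ} (hb : 1 < b) (hm : m ≠ 0) (hn : n ≠ 0) :
    Nat.log b m + Nat.log b n ≤ Nat.log b (m * n) := by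
  refine Nat.le_log_of_pow_le hb ?_
  rw [pow_add]
  exact Nat.mul_le_mul (Nat.pow_log_le_self b hm) (Nat.pow_log_le_self b hn)

theorem card_sumEquiv_preimage_prod {X Y : Type*} (S : Set (Set X)) (T : Set (Set Y)) :
    Nat.card (Set.sumEquiv ⁻¹' (S ×ˢ T)) = Nat.card S * Nat.card T := by
  rw [Nat.card_preimage_of_injective Set.sumEquiv.injective (by simp), ← Nat.card_prod]
  exact Nat.card_congr (Equiv.Set.prod S T)

theorem exists_preimage_inl_inr_eq {ι X Y : Type*} (f : ι → Set X) (g : ι → Set Y) :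
    ∃ h : ι → Set (X ⊕ Y), (fun i => Sum.inl ⁻¹' h i) = f ∧ (fun i => Sum.inr ⁻¹' h i) = g := by
  have hfg (i) := Prod.ext_iff.1 (Set.sumEquiv.apply_symm_apply (f i, g i))
  exact ⟨fun i => Set.sumEquiv.symm (f i, g i), funext fun i => (hfg i).1,
    funext fun i => (hfg i).2⟩

namespace BForm

variable {X Y : Type}

/-- Renaming of the variables of a Boolean formula along `g`, used to read a formula over the
variables of one automaton as a formula over those of a larger one. -/
def rename (g : X → Y) : BForm X → BForm Y
  | .tru => .tru
  | .fls => .fls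
  | .var x => .var (g x)
  | .not φ => .not (φ.rename g)
  | .and φ ψ => .and (φ.rename g) (ψ.rename g)
  | .or φ ψ => .or (φ.rename g) (ψ.rename g)

theorem holds_rename (g : X → Y) (s : Set Y) (φ : BForm X) :
    (φ.rename g).holds s ↔ φ.holds (g ⁻¹' s) := by
  induction φ <;> simp_all [rename, holds]

end BForm

/-- Renaming of the variables along `g` in the formula of a constraint pair, used to impose the
constraints of one automaton on letters over more variables. -/
def CPair.rename {X Y : Type} (g : X → Y) (c : CPair X) : CPair Y :=
  (c.1.rename g, c.2)

theorem cPairSat_rename {ι X Y : Type} {I : Set ι} {f : ι → Set Y} (g : X → Y) (c : CPair X) :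
    CPairSat I f (c.rename g) ↔ CPairSat I (fun i => g ⁻¹' f i) c := by
  obtain ⟨θ, _ | _, n⟩ := c <;> simp only [CPair.rename, CPairSat, BForm.holds_rename]

namespace CConstr

variable {ι X Y : Type}

/-- The conjunction of two counting constraints over disjoint sets of variables: `C` is imposed on
the traces of the letters on `X` and `D` on their traces on `Y`. -/
def disjSum (C : CConstr X) (D : CConstr Y) : CConstr (X ⊕ Y) :=
  C.map (CPair.rename Sum.inl) ++ D.map (CPair.rename Sum.inr)

theorem length_disjSum (C : CConstr X) (D : CConstr Y) :
    (C.disjSum D).length = C.length + D.length := by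
  simp [disjSum]

theorem forall_mem_disjSum {C : CConstr X} {D : CConstr Y} {P : CPair (X ⊕ Y) → Prop} :
    (∀ c ∈ C.disjSum D, P c) ↔
      (∀ c ∈ C, P (c.rename Sum.inl)) ∧ ∀ d ∈ D, P (d.rename Sum.inr) := by
  simp only [disjSum, List.forall_mem_append, List.forall_mem_map]

theorem cSat_disjSum {I : Set ι} {f : ι → Set (X ⊕ Y)} {C : CConstr X} {D : CConstr Y} :
    CSat I f (C.disjSum D) ↔
      CSat I (fun i => Sum.inl ⁻¹' f i) C ∧ CSat I (fun i => Sum.inr ⁻¹' f i) D := by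
  simp only [CSat, forall_mem_disjSum, cPairSat_rename]

end CConstr

namespace GNPT

variable {A Y Y₁ Y₂ : Type} {T : Set Node} {V : Node → A}

theorem card_Q_ne_zero (M : GNPT A Y) : Nat.card M.Q ≠ 0 :=
  Set.ncard_ne_zero_of_mem M.hinit M.finQ

theorem IsSafety.accepts_of_isRun {M : GNPT A Y} (hM : M.IsSafety) {r : Node → Set Y}
    (hr : M.IsRun T V r) : M.Accepts T V :=
  ⟨r, hr, fun _ hp => hM _ (infinitelyOften_nonempty M.finQ fun i => hr.1 _ (hp.mem i))⟩

/-- The synchronous product of two GNPTs with the parity condition of the second one only, meant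
for a `Safety` automaton `M₁`. A pair of states is encoded as the disjoint union of its
components. -/
def safetyProd (M₁ : GNPT A Y₁) (M₂ : GNPT A Y₂) : GNPT A (Y₁ ⊕ Y₂) where
  finY :=
    have := M₁.finY
    have := M₂.finY
    inferInstance
  b := max M₁.b M₂.b
  Q := Set.sumEquiv ⁻¹' (M₁.Q ×ˢ M₂.Q)
  finQ := (M₁.finQ.prod M₂.finQ).preimage Set.sumEquiv.injective.injOn
  δ q a := (M₁.δ (Sum.inl ⁻¹' q) a).disjSum (M₂.δ (Sum.inr ⁻¹' q) a)
  hb q hq a := CConstr.forall_mem_disjSum.2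
    ⟨fun c hc => le_max_of_le_left (M₁.hb _ hq.1 a c hc),
      fun c hc => le_max_of_le_right (M₂.hb _ hq.2 a c hc)⟩
  hsize q hq a := by
    rw [CConstr.length_disjSum, card_sumEquiv_preimage_prod]
    exact (add_le_add (M₁.hsize _ hq.1 a) (M₂.hsize _ hq.2 a)).trans
      (natLog_add_natLog_le_natLog_mul one_lt_two M₁.card_Q_ne_zero M₂.card_Q_ne_zero)
  init := Set.sumEquiv.symm (M₁.init, M₂.init)
  hinit := by
    rw [Set.mem_preimage, OrderIso.apply_symm_apply]
    exact ⟨M₁.hinit, M₂.hinit⟩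
  k := M₂.k
  F j := (Sum.inr ⁻¹' ·) ⁻¹' M₂.F j
  Fmono _ _ hij := Set.preimage_mono (M₂.Fmono hij)

variable {M₁ : GNPT A Y₁} {M₂ : GNPT A Y₂} {r : Node → Set (Y₁ ⊕ Y₂)}

theorem IsSafety.safetyProd (M₁ : GNPT A Y₁) (h₂ : M₂.IsSafety) : (M₁.safetyProd M₂).IsSafety :=
  fun _ hI => (parityOK_preimage_iff _).2 (h₂ _ (hI.image _))

theorem eq_init_safetyProd_iff {q : Set (Y₁ ⊕ Y₂)} :
    q = (M₁.safetyProd M₂).init ↔ Sum.inl ⁻¹' q = M₁.init ∧ Sum.inr ⁻¹' q = M₂.init :=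
  (Set.sumEquiv.toEquiv.eq_symm_apply (x := (M₁.init, M₂.init))).trans Prod.ext_iff

theorem isRun_safetyProd_iff :
    (M₁.safetyProd M₂).IsRun T V r ↔
      M₁.IsRun T V (fun x => Sum.inl ⁻¹' r x) ∧ M₂.IsRun T V (fun x => Sum.inr ⁻¹' r x) := by
  have mem_Q (q) : q ∈ (M₁.safetyProd M₂).Q ↔ Sum.inl ⁻¹' q ∈ M₁.Q ∧ Sum.inr ⁻¹' q ∈ M₂.Q :=
    Iff.rfl
  have δ_eq (q a) : (M₁.safetyProd M₂).δ q a =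
      (M₁.δ (Sum.inl ⁻¹' q) a).disjSum (M₂.δ (Sum.inr ⁻¹' q) a) := rfl
  simp only [IsRun, mem_Q, eq_init_safetyProd_iff, δ_eq, CConstr.cSat_disjSum, imp_and, forall_and]
  tauto

theorem IsRun.parityOK_safetyProd_iff (hr : (M₁.safetyProd M₂).IsRun T V r) {p : ℕ → Node}
    (hp : IsInfPath T p) :
    ParityOK (M₁.safetyProd M₂).k (M₁.safetyProd M₂).F (infinitelyOften fun i => r (p i)) ↔
      ParityOK M₂.k M₂.F (infinitelyOften fun i => Sum.inr ⁻¹' r (p i)) := by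
  have hproj : (infinitelyOften fun i => Sum.inr ⁻¹' r (p i)) =
      (Sum.inr ⁻¹' ·) '' infinitelyOften fun i => r (p i) :=
    infinitelyOften_comp (M₁.safetyProd M₂).finQ (fun i => hr.1 _ (hp.mem i))
      (Sum.inr ⁻¹' ·)
  rw [hproj]
  exact parityOK_preimage_iff _

theorem IsSafety.accepts_safetyProd_iff (h₁ : M₁.IsSafety) :
    (M₁.safetyProd M₂).Accepts T V ↔ M₁.Accepts T V ∧ M₂.Accepts T V := by
  constructor
  · rintro ⟨r, hr, hacc⟩
    obtain ⟨hr₁, hr₂⟩ := isRun_safetyProd_iff.1 hr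
    exact ⟨h₁.accepts_of_isRun hr₁, _, hr₂,
      fun p hp => (hr.parityOK_safetyProd_iff hp).1 (hacc p hp)⟩
  · rintro ⟨⟨r₁, hr₁, -⟩, r₂, hr₂, hacc⟩
    obtain ⟨r, rfl, rfl⟩ := exists_preimage_inl_inr_eq r₁ r₂
    have hr : (M₁.safetyProd M₂).IsRun T V r := isRun_safetyProd_iff.2 ⟨hr₁, hr₂⟩
    exact ⟨r, hr, fun p hp => (hr.parityOK_safetyProd_iff hp).2 (hacc p hp)⟩

end GNPT

theorem safety_safety_intersection_general
    {A Y₁ Y₂ : Type} (M₁ : GNPT A Y₁) (M₂ : GNPT A Y₂) (h₁ : M₁.IsSafety) :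
    ∃ (Y : Type) (M : GNPT A Y),
      (M₂.IsSafety → M.IsSafety) ∧
      Nat.card M.Q = Nat.card M₁.Q * Nat.card M₂.Q ∧
      M.b = max M₁.b M₂.b ∧
      ∀ (T : Set Node) (V : Node → A), IsTree T →
        (M.Accepts T V ↔ M₁.Accepts T V ∧ M₂.Accepts T V) :=
  ⟨Y₁ ⊕ Y₂, M₁.safetyProd M₂, GNPT.IsSafety.safetyProd M₁,
    card_sumEquiv_preimage_prod M₁.Q M₂.Q, rfl, fun _ _ _ => h₁.accepts_safetyProd_iff⟩

/-- **Lemma 5.** Given `Safety` GNPTs `A₁` and `A₂` over the same alphabet with `n₁`,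
`n₂` states and counting bounds `b₁`, `b₂`, there is a `Safety` GNPT `A` with `n₁·n₂`
states and counting bound `max{b₁, b₂}` such that `L(A) = L(A₁) ∩ L(A₂)`. -/
theorem safety_safety_intersection
    {A Y₁ Y₂ : Type} (M₁ : GNPT A Y₁) (M₂ : GNPT A Y₂)
    (h₁ : M₁.IsSafety) (h₂ : M₂.IsSafety) :
    ∃ (Y : Type) (M : GNPT A Y),
      M.IsSafety ∧
      Nat.card M.Q = Nat.card M₁.Q * Nat.card M₂.Q ∧
      M.b = max M₁.b M₂.b ∧
      ∀ (T : Set Node) (V : Node → A), IsTree T →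
        (M.Accepts T V ↔ M₁.Accepts T V ∧ M₂.Accepts T V) := by
  obtain ⟨Y, M, hM, hprod⟩ := safety_safety_intersection_general M₁ M₂ h₁
  exact ⟨Y, M, hM h₂, hprod⟩
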